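/- Let d ≥ 1 and let S be a finite subset of the closed unit ball B^d ⊂ ℝ^d with |S| = n ≥ 2 and 0 ∉ S. Set ρ = min_{x ∈ S} ‖x‖². For x ∈ S write x̂ = x/‖x‖. Let m = min_{x,y ∈ S, x ≠ y} ‖x̂ − ŷ‖ and ℓ = ⌈log₂ log₂ (4/m)⌉, and assume ℓ ≥ 1. Let ε > 0 satisfy ε < 1 − |⟨x̂, ŷ⟩| for all x, y ∈ S with x ≠ y. Then there exists an absolute constant C > 0 such that there exist a positive integer N ≤ C · (log n / ε²) · (log₂(4/m))^{2 log₂(π/√2)} and a map φ : {x̂ : x ∈ S} → ℝ^N all of whose coordinates lie in {−1/√N, 1/√N}, such that the following holds: for every function ν : S → ℝ satisfying |ν(x) − ‖x‖| ≤ ρ m² ε / 48 for all x ∈ S, and for all x, y ∈ S, |(ν(x)² + ν(y)² − 2 ν(x) ν(y) g_ℓ(⟨φ(x̂), φ(ŷ)⟩)) − ‖x − y‖²| ≤ ε ‖x − y‖². -/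

import Mathlib

/-!
Write `u = ⟪x̂, ŷ⟫` for the inner product of two normalized points, and let `t` be the point of
`[-1, 1]` with `g^[ℓ] t = u`.

*Existence of signs with correlations `t`.* For unit vectors `x, y`, the probability that a random
hyperplane separates them is `arccos ⟪x, y⟫ / π` (`ballMeasure_sep`): it is invariant under
isometries and additive along arcs, hence linear in the angle. So the signs of a random linear
functional have correlation `(2 / π) arcsin ⟪x, y⟫`, the preimage of `⟪x, y⟫` under `g`
(`exists_rounding`). Random signs on a finite probability space are themselves unit vectors of a
Euclidean space, so the rounding can be repeated `ℓ` times (`exists_unit_family`). Chernoff's bound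
and a union bound then provide `N` of order `log n / δ²` samples for which all empirical
correlations are within `δ` of the values `t` (`exists_sample`, `exists_sign_sketch`).

*Stability of `g^[ℓ]`.* With `A y = √2 sin (π y / 4)` one has `1 - g t = A (1 - t) ²`. As `A` is
concave and vanishes at `0`, changing `1 - t` by a factor `r` changes `1 - g t` by at most the
factor `r²`, hence `1 - g^[ℓ] t` by at most `r ^ 2 ^ ℓ`. As `A y ≤ √2 π y / 4`, the value `1 - t`
is at least `1 / 5`, for otherwise `1 - g^[ℓ] t` would be smaller than `m² / 2`, by the choice of
`ℓ`. Therefore `δ = ε / (10 * 2 ^ ℓ)` yields `|g^[ℓ] s - u| ≤ (3 / 4) ε (1 - u)` whenever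
`|s - t| ≤ δ` (`g_iter_stable`). Since `2 ^ ℓ ≤ 2 log₂ (4 / m)` and `log₂ (π / √2) ≥ 1`, this `δ`
gives the required bound on `N`.

*The norms.* As `‖x - y‖² ≥ 2 ‖x‖ ‖y‖ (1 - u) ≥ ρ m²`, the error in `u` costs at most
`(3 / 4) ε ‖x - y‖²` and the errors in the norms at most a quarter of `ε ‖x - y‖²` (`pair_error`).
-/

open Real RealInnerProductSpace

/-- `g(t) = sin(πt/2)`. -/
noncomputable def g (t : ℝ) : ℝ := Real.sin (Real.pi * t / 2)

/-! ### The iterates of `g` near `1` -/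

lemma one_sub_g (t : ℝ) : 1 - g t = 2 * sin (π / 4 * (1 - t)) ^ 2 := by
  have h : g t = cos (2 * (π / 4 * (1 - t))) := by
    rw [g, ← Real.cos_pi_div_two_sub]; congr 1; ring
  rw [h, Real.cos_two_mul, Real.cos_sq']; ring

lemma g_mem (t : ℝ) : g t ∈ Set.Icc (-1 : ℝ) 1 := ⟨Real.neg_one_le_sin _, Real.sin_le_one _⟩

lemma g_iter_mem (k : ℕ) {t : ℝ} (ht : t ∈ Set.Icc (-1 : ℝ) 1) :
    g^[k] t ∈ Set.Icc (-1 : ℝ) 1 := by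
  cases k with
  | zero => simpa using ht
  | succ k => rw [Function.iterate_succ_apply']; exact g_mem _

lemma g_iter_one (k : ℕ) : g^[k] 1 = 1 := by
  apply Function.iterate_fixed
  simp [g]

/-- Since `sin` is concave on `[0, π/2]` and vanishes at `0`, `sin a / a` is antitone. -/
lemma mul_sin_le_mul_sin {a b : ℝ} (ha : 0 ≤ a) (hab : a ≤ b) (hb : b ≤ π / 2) :
    a * sin b ≤ b * sin a := by
  rcases eq_or_lt_of_le (ha.trans hab) with h0 | h0
  · have : a = 0 := le_antisymm (h0 ▸ hab) ha
    simp [this, ← h0]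
  have hbm : b ∈ Set.Icc 0 π := ⟨h0.le, by linarith [pi_pos]⟩
  have h0m : (0 : ℝ) ∈ Set.Icc 0 π := ⟨le_rfl, pi_pos.le⟩
  have h1 : 0 ≤ a / b := by positivity
  have h2 : 0 ≤ 1 - a / b := by rw [sub_nonneg]; exact (div_le_one h0).2 hab
  have hc := strictConcaveOn_sin_Icc.concaveOn.2 hbm h0m h1 h2 (by ring)
  simp only [smul_eq_mul, mul_zero, add_zero, sin_zero] at hc
  rw [div_mul_cancel₀ _ h0.ne'] at hc
  have := mul_le_mul_of_nonneg_left hc h0.le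
  calc a * sin b = b * (a / b * sin b) := by field_simp
    _ ≤ _ := this

/-- A multiplicative perturbation by `r` of `1 - t` becomes one by at most `r ^ 2` of `1 - g t`. -/
lemma one_sub_g_ratio {s t r : ℝ} (hs : -1 ≤ s) (hst : s ≤ t) (ht : t ≤ 1)
    (h : 1 - s ≤ r * (1 - t)) : g s ≤ g t ∧ 1 - g s ≤ r ^ 2 * (1 - g t) := by
  have hp := pi_pos
  have h1 : (0 : ℝ) ≤ π / 4 * (1 - t) := mul_nonneg (by positivity) (by linarith)
  have h2 : π / 4 * (1 - t) ≤ π / 4 * (1 - s) := by gcongr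
  have h3 : π / 4 * (1 - s) ≤ π / 2 := by nlinarith
  have hA : 0 ≤ sin (π / 4 * (1 - t)) := sin_nonneg_of_nonneg_of_le_pi h1 (by linarith)
  have hB : 0 ≤ sin (π / 4 * (1 - s)) := sin_nonneg_of_nonneg_of_le_pi (h1.trans h2) (by linarith)
  have hmono : sin (π / 4 * (1 - t)) ≤ sin (π / 4 * (1 - s)) :=
    sin_le_sin_of_le_of_le_pi_div_two (by linarith) h3 h2
  have key : sin (π / 4 * (1 - s)) ≤ r * sin (π / 4 * (1 - t)) := by
    rcases eq_or_lt_of_le ht with h0 | h0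
    · have : s = 1 := by
        subst h0; simp at h; linarith
      simp [this, h0]
    · have hh := mul_sin_le_mul_sin h1 h2 h3
      have h4 : 0 < π / 4 * (1 - t) := mul_pos (by positivity) (by linarith)
      have h5 : π / 4 * (1 - s) ≤ r * (π / 4 * (1 - t)) := by nlinarith
      have h6 := mul_le_mul_of_nonneg_right h5 hA
      refine le_of_mul_le_mul_left ?_ h4
      linarith
  constructor
  · have := one_sub_g s
    have := one_sub_g t
    have := pow_le_pow_left₀ hA hmono 2
    linarith
  · rw [one_sub_g, one_sub_g]
    have := pow_le_pow_left₀ hB key 2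
    rw [mul_pow] at this
    linarith

lemma one_sub_g_iter_ratio (k : ℕ) {s t r : ℝ} (hs : -1 ≤ s) (hst : s ≤ t) (ht : t ≤ 1)
    (h : 1 - s ≤ r * (1 - t)) :
    g^[k] s ≤ g^[k] t ∧ 1 - g^[k] s ≤ r ^ (2 ^ k) * (1 - g^[k] t) := by
  induction k with
  | zero => exact ⟨hst, by simpa only [Function.iterate_zero, id, pow_zero, pow_one] using h⟩
  | succ k ih =>
    rw [Function.iterate_succ_apply', Function.iterate_succ_apply', pow_succ, pow_mul]
    exact one_sub_g_ratio (g_iter_mem k ⟨hs, hst.trans ht⟩).1 ih.1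
      (g_iter_mem k ⟨hs.trans hst, ht⟩).2 ih.2

lemma one_sub_g_iter_le (k : ℕ) {t : ℝ} (ht : t ∈ Set.Icc (-1 : ℝ) 1) :
    π ^ 2 / 8 * (1 - g^[k] t) ≤ (π ^ 2 / 8 * (1 - t)) ^ (2 ^ k) := by
  induction k with
  | zero => simp
  | succ k ih =>
    have hm := g_iter_mem k ht
    have h0 : 0 ≤ 1 - g^[k] t := by linarith [hm.2]
    have hp := pi_pos
    rw [Function.iterate_succ_apply', pow_succ 2 k, pow_mul, one_sub_g]
    refine le_trans ?_ (pow_le_pow_left₀ (by positivity) ih 2)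
    have h1 : sin (π / 4 * (1 - g^[k] t)) ^ 2 ≤ (π / 4 * (1 - g^[k] t)) ^ 2 :=
      sq_le_sq' (by
        have := sin_nonneg_of_nonneg_of_le_pi (x := π / 4 * (1 - g^[k] t)) (by positivity)
          (by nlinarith [hm.1])
        have : 0 ≤ π / 4 * (1 - g^[k] t) := by positivity
        linarith) (sin_le (by positivity))
    calc _ ≤ π ^ 2 / 8 * (2 * (π / 4 * (1 - g^[k] t)) ^ 2) := by gcongr
      _ = _ := by ring

/-- At a point `t` where `1 - g^[k] t` is not too small (at least `m ^ 2 / 2`, where `2 ^ 2 ^ k` is at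
least `4 / m`), a perturbation of `t` of order `ε / 2 ^ k` changes `1 - g^[k] t` by a factor
`1 ± 3 / 4 * ε` at most. -/
lemma g_iter_stable (k : ℕ) {s t ε m : ℝ} (hs : s ∈ Set.Icc (-1 : ℝ) 1)
    (ht : t ∈ Set.Icc (-1 : ℝ) 1) (hm : 0 < m) (hk : 4 / m ≤ 2 ^ (2 ^ k))
    (hgap : m ^ 2 / 2 ≤ 1 - g^[k] t) (hε : 0 < ε) (hε1 : ε < 1)
    (hst : |s - t| ≤ ε / (10 * 2 ^ k)) :
    |g^[k] s - g^[k] t| ≤ 3 / 4 * ε * (1 - g^[k] t) := by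
  have hp := pi_gt_three
  have hp' := pi_lt_d2
  -- the gap `1 - t` is bounded below by a constant: otherwise iterated squaring makes it too small
  have hy : (1 : ℝ) / 5 ≤ 1 - t := by
    by_contra! hlt
    have h1 := one_sub_g_iter_le k ht
    have h2 : π ^ 2 / 8 * (1 - t) ≤ (2 ^ 2)⁻¹ := by nlinarith [ht.2]
    have h3 : (π ^ 2 / 8 * (1 - t)) ^ (2 ^ k) ≤ ((2 ^ 2)⁻¹) ^ (2 ^ k) :=
      pow_le_pow_left₀ (mul_nonneg (by positivity) (by linarith [ht.2])) h2 _
    have h4 : (((2 : ℝ) ^ 2)⁻¹) ^ (2 ^ k) = ((2 ^ (2 ^ k))⁻¹) ^ 2 := by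
      rw [← inv_pow, ← pow_mul, mul_comm, pow_mul, inv_pow]
    have h5 : ((2 : ℝ) ^ (2 ^ k))⁻¹ ≤ m / 4 := by
      rw [inv_le_comm₀ (by positivity) (by positivity), inv_div]; exact hk
    have h6 : (((2 : ℝ) ^ (2 ^ k))⁻¹) ^ 2 ≤ (m / 4) ^ 2 := pow_le_pow_left₀ (by positivity) h5 2
    have h7 : 1 ≤ π ^ 2 / 8 := by nlinarith
    have h8 : 1 - g^[k] t ≤ π ^ 2 / 8 * (1 - g^[k] t) :=
      le_mul_of_one_le_left (by nlinarith) h7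
    nlinarith
  have hgap0 : 0 < 1 - g^[k] t := lt_of_lt_of_le (by positivity) hgap
  set η : ℝ := ε / (2 * 2 ^ k) with hη
  have h2k : (1 : ℝ) ≤ 2 ^ k := one_le_pow₀ (by norm_num)
  have hη0 : 0 < η := by positivity
  have hη2 : (2 : ℝ) ^ k * η = ε / 2 := by rw [hη]; field_simp
  have hη1 : η ≤ 1 / 2 := by nlinarith
  have hst' : |s - t| ≤ η * (1 - t) := by
    refine hst.trans ?_
    have : ε / (10 * 2 ^ k) = η * (1 / 5) := by rw [hη]; field_simp; norm_num
    rw [this]; gcongr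
  obtain ⟨hst1, hst2⟩ := abs_le.1 hst'
  rcases le_total s t with h | h
  · obtain ⟨h1, h2⟩ := one_sub_g_iter_ratio k (r := 1 + η) hs.1 h ht.2 (by linarith)
    have h3 : (1 + η) ^ (2 ^ k) ≤ 1 + 3 / 4 * ε := by
      calc (1 + η) ^ (2 ^ k) ≤ (exp η) ^ (2 ^ k) := by
            gcongr; linarith [add_one_le_exp η]
        _ = exp (ε / 2) := by
            rw [← exp_nat_mul]; push_cast; rw [hη2]
        _ ≤ 1 + 3 / 4 * ε := by
            have := (abs_le.1 (abs_exp_sub_one_sub_id_le (x := ε / 2)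
              (by rw [abs_of_pos (by positivity)]; linarith))).2
            nlinarith
    have h4 := mul_le_mul_of_nonneg_right h3 hgap0.le
    rw [abs_le]; constructor <;> nlinarith
  · have hr : (0 : ℝ) < 1 - η := by linarith
    obtain ⟨h1, h2⟩ := one_sub_g_iter_ratio k (r := (1 - η)⁻¹) ht.1 h hs.2
      (by rw [← div_eq_inv_mul, le_div_iff₀ hr]; linarith)
    rw [inv_pow, ← div_eq_inv_mul, le_div_iff₀ (by positivity)] at h2
    have h3 : 1 - ε / 2 ≤ (1 - η) ^ (2 ^ k) := by
      have := one_add_mul_le_pow (a := -η) (by linarith) (2 ^ k)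
      push_cast at this
      rw [← sub_eq_add_neg] at this
      linarith
    have h4 := mul_le_mul_of_nonneg_right h3 hgap0.le
    rw [abs_le]; constructor <;> nlinarith

/-! ### Simultaneous concentration for samples from a finite distribution -/

section Sampling

variable {Ω ι : Type*} [Fintype Ω] [Fintype ι]

lemma sum_mul_exp_le (p : Ω → ℝ) (hp : ∀ a, 0 ≤ p a) (hsum : ∑ a, p a = 1)
    (Z : Ω → ℝ) (hZ : ∀ a, |Z a| ≤ 1) (l : ℝ) (hl : 2 * |l| ≤ 1) :
    ∑ a, p a * exp (l * (Z a - ∑ b, p b * Z b)) ≤ exp (l ^ 2) := by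
  set M := ∑ b, p b * Z b with hM
  have hM1 : |M| ≤ 1 := by
    calc |M| ≤ ∑ b, |p b * Z b| := Finset.abs_sum_le_sum_abs _ _
      _ ≤ ∑ b, p b * 1 := by
        gcongr with b
        rw [abs_mul, abs_of_nonneg (hp b)]
        exact mul_le_mul_of_nonneg_left (hZ b) (hp b)
      _ = 1 := by simpa using hsum
  have h1 : ∀ a, p a * exp (l * (Z a - M)) ≤
      p a + l * (p a * Z a) - l * M * p a + l ^ 2 * (p a - 2 * M * (p a * Z a) + M ^ 2 * p a) := by
    intro a
    have hb : |l * (Z a - M)| ≤ 1 := by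
      rw [abs_mul]
      have : |Z a - M| ≤ 2 := (abs_sub _ _).trans (by linarith [hZ a])
      nlinarith [abs_nonneg l]
    have h2 := (abs_le.1 (abs_exp_sub_one_sub_id_le hb)).2
    have h3 : Z a ^ 2 ≤ 1 := (sq_le_one_iff_abs_le_one _).2 (hZ a)
    have h4 : exp (l * (Z a - M)) ≤
        1 + l * (Z a - M) + l ^ 2 * (1 - 2 * M * Z a + M ^ 2) := by
      nlinarith [sq_nonneg l]
    have := mul_le_mul_of_nonneg_left h4 (hp a)
    linarith
  calc _ ≤ ∑ a, (p a + l * (p a * Z a) - l * M * p a +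
        l ^ 2 * (p a - 2 * M * (p a * Z a) + M ^ 2 * p a)) := Finset.sum_le_sum fun a _ => h1 a
    _ = 1 + l ^ 2 * (1 - M ^ 2) := by
        simp only [Finset.sum_add_distrib, Finset.sum_sub_distrib, ← Finset.mul_sum, hsum, ← hM]
        ring
    _ ≤ 1 + l ^ 2 := by nlinarith [sq_nonneg (l * M)]
    _ ≤ exp (l ^ 2) := by linarith [add_one_le_exp (l ^ 2)]

/-- Chernoff's method with the weights `∏ k, p (ω k)` of `N` independent samples, and a union bound
over the family `Z`. -/
lemma exists_sample (p : Ω → ℝ) (hp : ∀ a, 0 ≤ p a) (hsum : ∑ a, p a = 1)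
    (Z : ι → Ω → ℝ) (hZ : ∀ i a, |Z i a| ≤ 1) {δ : ℝ} (hδ : 0 < δ) (hδ1 : δ ≤ 1) (N : ℕ)
    (hN : 2 * Fintype.card ι * exp (-(δ ^ 2 * N / 4)) < 1) :
    ∃ ω : Fin N → Ω, ∀ i, |∑ k, Z i (ω k) - N * ∑ a, p a * Z i a| ≤ N * δ := by
  by_contra! hcon
  set M : ι → ℝ := fun i => ∑ a, p a * Z i a with hM
  have hmgf : ∀ (l : ℝ) (i : ι), 2 * |l| ≤ 1 →
      ∑ ω : Fin N → Ω, (∏ k, p (ω k)) * exp (l * (∑ k, Z i (ω k) - N * M i)) ≤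
        exp (N * l ^ 2) := by
    intro l i hl
    have h1 : ∀ ω : Fin N → Ω, (∏ k, p (ω k)) * exp (l * (∑ k, Z i (ω k) - N * M i)) =
        ∏ k, (p (ω k) * exp (l * (Z i (ω k) - M i))) := by
      intro ω
      rw [Finset.prod_mul_distrib, ← exp_sum, ← Finset.mul_sum, Finset.sum_sub_distrib]
      simp
    simp_rw [h1]
    rw [← Fintype.sum_pow (fun a => p a * exp (l * (Z i a - M i))) N, exp_nat_mul]
    exact pow_le_pow_left₀ (Finset.sum_nonneg fun a _ => mul_nonneg (hp a) (exp_nonneg _))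
      (sum_mul_exp_le p hp hsum (Z i) (hZ i) l hl) N
  have hone : ∑ ω : Fin N → Ω, ∏ k, p (ω k) = 1 := by
    rw [← Fintype.sum_pow, hsum, one_pow]
  -- the optimal Chernoff parameter for the crude bound `exp (l ^ 2)` is `l = δ / 2`
  set l : ℝ := δ / 2 with hl
  have hla : 2 * |l| ≤ 1 := by rw [abs_of_pos (by positivity)]; linarith
  have hla' : 2 * |-l| ≤ 1 := by rwa [abs_neg]
  set W : (Fin N → Ω) → ι → ℝ := fun ω i => ∑ k, Z i (ω k) - N * M i with hW
  have hbad : ∀ ω : Fin N → Ω,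
      1 ≤ ∑ i, (exp (l * W ω i) + exp (-l * W ω i)) * exp (-(l * (N * δ))) := by
    intro ω
    obtain ⟨i, hi⟩ := hcon ω
    have hpos : ∀ j, 0 ≤ (exp (l * W ω j) + exp (-l * W ω j)) * exp (-(l * (N * δ))) :=
      fun j => by positivity
    refine le_trans ?_ (Finset.single_le_sum (fun j _ => hpos j) (Finset.mem_univ i))
    have hl0 : 0 < l := by positivity
    rw [add_mul, ← exp_add, ← exp_add]
    rcases lt_abs.1 hi with h | h
    · have : 1 ≤ exp (l * W ω i + -(l * (N * δ))) := one_le_exp (by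
        have := mul_le_mul_of_nonneg_left h.le hl0.le
        simp only [hW]; linarith)
      linarith [exp_pos (-l * W ω i + -(l * (N * δ)))]
    · have : 1 ≤ exp (-l * W ω i + -(l * (N * δ))) := one_le_exp (by
        have := mul_le_mul_of_nonneg_left h.le hl0.le
        simp only [hW]; linarith)
      linarith [exp_pos (l * W ω i + -(l * (N * δ)))]
  have hfin : (1 : ℝ) ≤ 2 * Fintype.card ι * exp (-(δ ^ 2 * N / 4)) := by
    calc (1 : ℝ) = ∑ ω : Fin N → Ω, (∏ k, p (ω k)) * 1 := by simp [hone]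
      _ ≤ ∑ ω : Fin N → Ω, (∏ k, p (ω k)) *
          ∑ i, (exp (l * W ω i) + exp (-l * W ω i)) * exp (-(l * (N * δ))) :=
        Finset.sum_le_sum fun ω _ => mul_le_mul_of_nonneg_left (hbad ω)
          (Finset.prod_nonneg fun k _ => hp _)
      _ = ∑ i, (∑ ω : Fin N → Ω, (∏ k, p (ω k)) * exp (l * W ω i) +
            ∑ ω : Fin N → Ω, (∏ k, p (ω k)) * exp (-l * W ω i)) * exp (-(l * (N * δ))) := by
        simp_rw [Finset.mul_sum]
        rw [Finset.sum_comm]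
        refine Finset.sum_congr rfl fun i _ => ?_
        rw [← Finset.sum_add_distrib, Finset.sum_mul]
        refine Finset.sum_congr rfl fun ω _ => ?_
        ring
      _ ≤ ∑ _i : ι, (exp (N * l ^ 2) + exp (N * l ^ 2)) * exp (-(l * (N * δ))) := by
        gcongr with i
        · exact hmgf l i hla
        · simpa using hmgf (-l) i hla'
      _ = 2 * Fintype.card ι * exp (-(δ ^ 2 * N / 4)) := by
        have : exp (-(δ ^ 2 * N / 4)) = exp (N * l ^ 2) * exp (-(l * (N * δ))) := by
          rw [← exp_add, hl]; congr 1; ring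
        rw [this]
        simp
        ring
  linarith

end Sampling

/-! ### Hyperplane rounding -/

section Rounding

open MeasureTheory

/-- A bounded additive function on `[0, π)` is linear: its deviation `H` from
linearity vanishes at `π / 2`, so doubling the argument modulo `π / 2` doubles `H`, and a bounded
`H` must vanish. -/
lemma linear_of_additive (G : ℝ → ℝ) (h0 : ∀ a, 0 ≤ G a) (h1 : ∀ a, G a ≤ 1)
    (hadd : ∀ a b, 0 ≤ a → 0 ≤ b → a + b < π → G (a + b) = G a + G b)
    (hhalf : G (π / 2) = 1 / 2) {θ : ℝ} (hθ0 : 0 ≤ θ) (hθ : θ < π) : G θ = θ / π := by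
  have hp := pi_pos
  have hsmall : ∀ n : ℕ, ∀ a, 0 ≤ a → a < π / 2 → |G a - a / π| ≤ (1 / 2) ^ n := by
    intro n
    induction n with
    | zero =>
      intro a ha ha'
      have h2 : 0 ≤ a / π := by positivity
      have h3 : a / π ≤ 1 := (div_le_one hp).2 (by linarith)
      rw [pow_zero, abs_le]
      constructor <;> linarith [h0 a, h1 a]
    | succ n ih =>
      intro a ha ha'
      have hd := hadd a a ha ha (by linarith)
      have hdiv : (a + a) / π = 2 * (a / π) := by ring
      have key : |2 * (G a - a / π)| ≤ (1 / 2) ^ n := by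
        rcases lt_or_ge (a + a) (π / 2) with h | h
        · have := ih (a + a) (by linarith) h
          rw [hd, hdiv] at this
          convert this using 2
          ring
        · have h4 := hadd (π / 2) (a + a - π / 2) (by linarith) (by linarith) (by linarith)
          rw [add_sub_cancel, hd, hhalf] at h4
          have := ih (a + a - π / 2) (by linarith) (by linarith)
          have h5 : (a + a - π / 2) / π = 2 * (a / π) - 1 / 2 := by field_simp; ring
          rw [h5] at this
          convert this using 2
          linarith
      rw [abs_mul, abs_two] at key
      rw [pow_succ]; linarith
  have hlt : ∀ a, 0 ≤ a → a < π / 2 → G a = a / π := by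
    intro a ha ha'
    have : |G a - a / π| ≤ 0 :=
      ge_of_tendsto' (tendsto_pow_atTop_nhds_zero_of_lt_one (by norm_num) (by norm_num))
        fun n => hsmall n a ha ha'
    linarith [abs_nonpos_iff.1 this]
  rcases lt_or_ge θ (π / 2) with h | h
  · exact hlt θ hθ0 h
  · have h4 := hadd (π / 2) (θ - π / 2) (by linarith) (by linarith) (by linarith)
    rw [add_sub_cancel, hhalf, hlt (θ - π / 2) (by linarith) (by linarith)] at h4
    rw [h4]; field_simp; ring

variable {E : Type*} [NormedAddCommGroup E] [InnerProductSpace ℝ E]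

/-- The set of normal vectors `z` of hyperplanes separating `x` from `y`; the zero value of an inner
product counts as positive. -/
def sep (x y : E) : Set E := {z | ¬ (0 ≤ ⟪x, z⟫ ↔ 0 ≤ ⟪y, z⟫)}

lemma sep_comm (x y : E) : sep x y = sep y x := by
  ext z; simp only [sep, Set.mem_ofPred_eq]; tauto

lemma sep_self (x : E) : sep x x = ∅ := by
  ext z; simp [sep]

/-- The point at angle `θ` on the unit circle of the oriented plane with basis `e₁, e₂`. -/
noncomputable def circ (e₁ e₂ : E) (θ : ℝ) : E := cos θ • e₁ + sin θ • e₂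

lemma inner_circ {e₁ e₂ : E} (h₁ : ‖e₁‖ = 1) (h₂ : ‖e₂‖ = 1) (h₁₂ : ⟪e₁, e₂⟫ = 0)
    (a b : ℝ) : ⟪circ e₁ e₂ a, circ e₁ e₂ b⟫ = cos (a - b) := by
  have h₂₁ : ⟪e₂, e₁⟫ = 0 := by rw [real_inner_comm]; exact h₁₂
  simp only [circ, inner_add_left, inner_add_right, real_inner_smul_left, real_inner_smul_right,
    h₁₂, h₂₁, real_inner_self_eq_norm_sq, h₁, h₂, cos_sub]
  ring

lemma norm_circ {e₁ e₂ : E} (h₁ : ‖e₁‖ = 1) (h₂ : ‖e₂‖ = 1) (h₁₂ : ⟪e₁, e₂⟫ = 0)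
    (a : ℝ) : ‖circ e₁ e₂ a‖ = 1 := by
  have h := inner_circ h₁ h₂ h₁₂ a a
  rw [sub_self, cos_zero, real_inner_self_eq_norm_sq] at h
  exact (pow_eq_one_iff_of_nonneg (norm_nonneg _) two_ne_zero).1 h

variable [MeasurableSpace E] [BorelSpace E]

lemma measurableSet_nonneg (x : E) : MeasurableSet {z : E | 0 ≤ ⟪x, z⟫} :=
  (isClosed_le continuous_const (by fun_prop)).measurableSet

lemma measurableSet_sep (x y : E) : MeasurableSet (sep x y) :=
  ((measurableSet_nonneg x).iff (measurableSet_nonneg y)).compl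

variable [FiniteDimensional ℝ E]

variable (E) in
/-- The uniform probability measure on the unit ball. All that matters about it is its invariance
under isometries and the fact that hyperplanes are null. -/
noncomputable def ballMeasure : Measure E := ProbabilityTheory.cond volume (Metric.ball (0 : E) 1)

instance : IsProbabilityMeasure (ballMeasure E) :=
  ProbabilityTheory.cond_isProbabilityMeasure_of_finite
    (Metric.measure_ball_pos _ _ one_pos).ne' measure_ball_lt_top.ne

lemma ballMeasure_hyperplane {y : E} (hy : y ≠ 0) : ballMeasure E {z | ⟪y, z⟫ = 0} = 0 := by
  apply ProbabilityTheory.cond_absolutelyContinuous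
  have h : {z : E | ⟪y, z⟫ = 0} = ((innerSL ℝ y).ker : Submodule ℝ E) := by
    ext z; simp
  rw [h]
  apply Measure.addHaar_submodule
  intro ht
  have : y ∈ (innerSL ℝ y).ker := by rw [ht]; trivial
  simp at this
  exact hy this

lemma ballMeasure_sep_neg (x : E) {y : E} (hy : y ≠ 0) :
    (ballMeasure E).real (sep x (-y)) = 1 - (ballMeasure E).real (sep x y) := by
  rw [← probReal_compl_eq_one_sub (measurableSet_sep x y)]
  apply measureReal_congr
  have h0 : ∀ᵐ z ∂(ballMeasure E), ⟪y, z⟫ ≠ 0 := by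
    rw [ae_iff]; simpa using ballMeasure_hyperplane hy
  filter_upwards [h0] with z hz
  apply propext
  change z ∈ sep x (-y) ↔ z ∈ (sep x y)ᶜ
  simp only [sep, Set.mem_ofPred_eq, Set.mem_compl_iff, inner_neg_left, not_not]
  rcases lt_or_gt_of_ne hz with h | h
  · have h2 : ¬ 0 ≤ ⟪y, z⟫ := not_le.2 h
    have h3 : 0 ≤ -⟪y, z⟫ := by linarith
    tauto
  · have h2 : 0 ≤ ⟪y, z⟫ := h.le
    have h3 : ¬ 0 ≤ -⟪y, z⟫ := by linarith
    tauto

lemma ballMeasure_sep_map (R : E ≃ₗᵢ[ℝ] E) (x y : E) :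
    (ballMeasure E).real (sep (R x) (R y)) = (ballMeasure E).real (sep x y) := by
  have h1 : sep x y = R ⁻¹' (sep (R x) (R y)) := by
    ext z; simp [sep]
  have h2 : Metric.ball (0 : E) 1 ∩ R ⁻¹' (sep (R x) (R y)) =
      R ⁻¹' (Metric.ball (0 : E) 1 ∩ sep (R x) (R y)) := by
    ext z; simp
  rw [measureReal_def, measureReal_def, h1, ballMeasure,
    ProbabilityTheory.cond_apply measurableSet_ball,
    ProbabilityTheory.cond_apply measurableSet_ball, h2,
    R.measurePreserving.measure_preimage
      (measurableSet_ball.inter (measurableSet_sep _ _)).nullMeasurableSet]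

/-- Reflecting in the line at angle `s` sends the angle `a` to `2 * s - a`. -/
lemma ballMeasure_sep_circ_reflect {e₁ e₂ : E} (h₁ : ‖e₁‖ = 1) (h₂ : ‖e₂‖ = 1) (h₁₂ : ⟪e₁, e₂⟫ = 0)
    (s a b : ℝ) :
    (ballMeasure E).real (sep (circ e₁ e₂ (2 * s - a)) (circ e₁ e₂ (2 * s - b))) =
      (ballMeasure E).real (sep (circ e₁ e₂ a) (circ e₁ e₂ b)) := by
  have key : ∀ c, (ℝ ∙ circ e₁ e₂ s).reflection (circ e₁ e₂ c) = circ e₁ e₂ (2 * s - c) := by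
    intro c
    rw [Submodule.reflection_singleton_apply, inner_circ h₁ h₂ h₁₂, norm_circ h₁ h₂ h₁₂]
    have hc : cos (2 * s - c) = 2 * cos (s - c) * cos s - cos c := by
      have : c = s - (s - c) := by ring
      rw [show 2 * s - c = s + (s - c) by ring, cos_add]
      nth_rewrite 4 [this]
      rw [cos_sub s (s - c)]; ring
    have hs : sin (2 * s - c) = 2 * cos (s - c) * sin s - sin c := by
      have : c = s - (s - c) := by ring
      rw [show 2 * s - c = s + (s - c) by ring, sin_add]
      nth_rewrite 4 [this]
      rw [sin_sub s (s - c)]; ring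
    simp only [circ, hc, hs]
    simp
    module
  rw [← key, ← key, ballMeasure_sep_map]

/-- A hyperplane separates the endpoints of an arc shorter than `π` iff it separates exactly one of
the two pieces into which an intermediate point cuts the arc. -/
lemma ballMeasure_sep_add {e₁ e₂ : E} (h₁ : ‖e₁‖ = 1) (h₂ : ‖e₂‖ = 1) (h₁₂ : ⟪e₁, e₂⟫ = 0)
    {a b : ℝ} (ha : 0 ≤ a) (hb : 0 ≤ b) (hab : a + b < π) :
    (ballMeasure E).real (sep (circ e₁ e₂ 0) (circ e₁ e₂ (a + b))) =
      (ballMeasure E).real (sep (circ e₁ e₂ 0) (circ e₁ e₂ a)) +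
      (ballMeasure E).real (sep (circ e₁ e₂ 0) (circ e₁ e₂ b)) := by
  rcases eq_or_lt_of_le (add_nonneg ha hb) with h0 | h0
  · have ha0 : a = 0 := by linarith
    have hb0 : b = 0 := by linarith
    simp [ha0, hb0, sep_self]
  have hS : 0 < sin (a + b) := sin_pos_of_pos_of_lt_pi h0 hab
  have hA : 0 ≤ sin a := sin_nonneg_of_nonneg_of_le_pi ha (by linarith)
  have hB : 0 ≤ sin b := sin_nonneg_of_nonneg_of_le_pi hb (by linarith)
  have hvec : sin (a + b) • circ e₁ e₂ a = sin b • circ e₁ e₂ 0 + sin a • circ e₁ e₂ (a + b) := by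
    have hc : sin (a + b) * cos a = sin b + sin a * cos (a + b) := by
      rw [sin_add, cos_add]; linear_combination sin b * sin_sq_add_cos_sq a
    have hs : sin (a + b) * sin a = sin a * sin (a + b) := by ring
    simp only [circ, smul_add, smul_smul, hc, hs, cos_zero, sin_zero]
    module
  have hAB : 0 < sin a + sin b := by
    rcases eq_or_lt_of_le hA with h | h
    · rcases eq_or_lt_of_le hB with h' | h'
      · rw [sin_add, ← h, ← h'] at hS; simp at hS
      · linarith
    · linarith
  have hb' : (ballMeasure E).real (sep (circ e₁ e₂ 0) (circ e₁ e₂ b)) =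
      (ballMeasure E).real (sep (circ e₁ e₂ a) (circ e₁ e₂ (a + b))) := by
    rw [← ballMeasure_sep_circ_reflect h₁ h₂ h₁₂ ((a + b) / 2) 0 b, sep_comm]
    congr 3 <;> ring
  have hpt : ∀ z : E, (0 ≤ ⟪circ e₁ e₂ 0, z⟫ → 0 ≤ ⟪circ e₁ e₂ (a + b), z⟫ →
      0 ≤ ⟪circ e₁ e₂ a, z⟫) ∧ (¬ 0 ≤ ⟪circ e₁ e₂ 0, z⟫ → ¬ 0 ≤ ⟪circ e₁ e₂ (a + b), z⟫ →
      ¬ 0 ≤ ⟪circ e₁ e₂ a, z⟫) := by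
    intro z
    have hz := congrArg (fun w => ⟪w, z⟫) hvec
    simp only [inner_add_left, real_inner_smul_left] at hz
    constructor
    · intro hX hW
      have : 0 ≤ sin (a + b) * ⟪circ e₁ e₂ a, z⟫ := by rw [hz]; positivity
      exact nonneg_of_mul_nonneg_right this hS
    · intro hX hW hY
      push Not at hX hW
      have h3 : 0 ≤ sin (a + b) * ⟪circ e₁ e₂ a, z⟫ := by positivity
      rw [hz] at h3
      rcases eq_or_lt_of_le hA with h | h
      · have : 0 < sin b := by linarith
        nlinarith
      · nlinarith
  rw [hb', ← measureReal_union _ (measurableSet_sep _ _)]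
  · congr 1
    ext z
    have := hpt z
    simp only [sep, Set.mem_union, Set.mem_ofPred_eq]
    tauto
  · rw [Set.disjoint_left]
    intro z
    have := hpt z
    simp only [sep, Set.mem_ofPred_eq]
    tauto

lemma ballMeasure_sep_circ {e₁ e₂ : E} (h₁ : ‖e₁‖ = 1) (h₂ : ‖e₂‖ = 1) (h₁₂ : ⟪e₁, e₂⟫ = 0)
    {θ : ℝ} (hθ0 : 0 ≤ θ) (hθ : θ < π) :
    (ballMeasure E).real (sep (circ e₁ e₂ 0) (circ e₁ e₂ θ)) = θ / π := by
  refine linear_of_additive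
    (fun θ => (ballMeasure E).real (sep (circ e₁ e₂ 0) (circ e₁ e₂ θ)))
    (fun a => measureReal_nonneg) (fun a => measureReal_le_one)
    (fun a b ha hb hab => ballMeasure_sep_add h₁ h₂ h₁₂ ha hb hab) ?_ hθ0 hθ
  -- reflecting in the line through `e₁` replaces `e₂` by `-e₂`
  have h := ballMeasure_sep_circ_reflect h₁ h₂ h₁₂ 0 0 (π / 2)
  have hneg : circ e₁ e₂ (2 * 0 - π / 2) = -circ e₁ e₂ (π / 2) := by
    simp [circ]
  have hne : circ e₁ e₂ (π / 2) ≠ 0 := by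
    rw [← norm_ne_zero_iff, norm_circ h₁ h₂ h₁₂]; exact one_ne_zero
  rw [hneg, ballMeasure_sep_neg _ hne] at h
  simp only [mul_zero, sub_zero] at h
  linarith

/-- A random hyperplane separates two unit vectors with probability proportional to their angle. -/
lemma ballMeasure_sep {x y : E} (hx : ‖x‖ = 1) (hy : ‖y‖ = 1) :
    (ballMeasure E).real (sep x y) = arccos ⟪x, y⟫ / π := by
  have hxx : ⟪x, x⟫ = 1 := by rw [real_inner_self_eq_norm_sq, hx]; norm_num
  have hyy : ⟪y, y⟫ = 1 := by rw [real_inner_self_eq_norm_sq, hy]; norm_num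
  have hb := abs_real_inner_le_norm x y
  rw [hx, hy, one_mul, abs_le] at hb
  rcases eq_or_lt_of_le hb.1 with h | h
  · have hyx : y = -x := by
      have h' : ⟪y, -x⟫ = 1 := by rw [inner_neg_right, real_inner_comm, ← h]; norm_num
      exact (inner_eq_one_iff_of_norm_eq_one hy (by rwa [norm_neg])).1 h'
    have hx0 : x ≠ 0 := by rw [← norm_ne_zero_iff, hx]; exact one_ne_zero
    rw [← h, arccos_neg_one, hyx, ballMeasure_sep_neg _ hx0, sep_self]
    simp [pi_ne_zero]
  rcases eq_or_lt_of_le hb.2 with h' | h'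
  · have hxy : x = y := (inner_eq_one_iff_of_norm_eq_one hx hy).1 h'
    rw [h', hxy, sep_self]; simp
  set u := ⟪x, y⟫ with hu
  have hs : sin (arccos u) = √(1 - u ^ 2) := sin_arccos u
  have hpos : 0 < 1 - u ^ 2 := by nlinarith
  have hq : √(1 - u ^ 2) ^ 2 = 1 - u ^ 2 := sq_sqrt hpos.le
  have hq0 : 0 < √(1 - u ^ 2) := sqrt_pos.2 hpos
  set e : E := (√(1 - u ^ 2))⁻¹ • (y - u • x) with he
  have he1 : ‖e‖ = 1 := by
    have : ‖e‖ ^ 2 = 1 := by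
      rw [← real_inner_self_eq_norm_sq, he]
      simp only [real_inner_smul_left, real_inner_smul_right, inner_sub_left, inner_sub_right,
        hxx, hyy, real_inner_comm x y, ← hu]
      field_simp
      rw [hq]; ring
    exact (pow_eq_one_iff_of_nonneg (norm_nonneg _) two_ne_zero).1 this
  have hxe : ⟪x, e⟫ = 0 := by
    rw [he, real_inner_smul_right, inner_sub_right, real_inner_smul_right, hxx, ← hu]
    ring
  have hyc : circ x e (arccos u) = y := by
    rw [circ, cos_arccos hb.1 hb.2, hs, he, smul_smul, mul_inv_cancel₀ hq0.ne']
    module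
  have hxc : circ x e 0 = x := by simp [circ]
  have hlt : arccos u < π := by
    refine lt_of_le_of_ne (arccos_le_pi u) fun hh => ?_
    rw [arccos_eq_pi] at hh
    linarith
  have := ballMeasure_sep_circ hx he1 hxe (arccos_nonneg u) hlt
  rwa [hyc, hxc] at this

/-- The real number `1` or `-1` coded by a Boolean. -/
def sgn (b : Bool) : ℝ := if b then 1 else -1

lemma sgn_mul_self (b : Bool) : sgn b * sgn b = 1 := by cases b <;> simp [sgn]

lemma abs_sgn (b : Bool) : |sgn b| = 1 := by cases b <;> simp [sgn]

/-- Grothendieck's identity: signs of a random linear functional turn a Gram matrix of unit vectors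
into the correlation matrix with entries `(2 / π) * arcsin`, that is, the preimage under `g`. -/
lemma exists_rounding {ι : Type*} [Fintype ι] [DecidableEq ι] (v : ι → E) (hv : ∀ i, ‖v i‖ = 1) :
    ∃ p : (ι → Bool) → ℝ, (∀ σ, 0 ≤ p σ) ∧ ∑ σ, p σ = 1 ∧
      ∀ i j, g (∑ σ, p σ * (sgn (σ i) * sgn (σ j))) = ⟪v i, v j⟫ := by
  let T : E → ι → Bool := fun z i => decide (0 ≤ ⟪v i, z⟫)
  have hT : Measurable T := by
    refine measurable_pi_lambda _ fun i => ?_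
    refine measurable_to_bool ?_
    convert measurableSet_nonneg (v i) using 1
    ext z; simp [T]
  let P : Measure (ι → Bool) := (ballMeasure E).map T
  have : IsProbabilityMeasure P := Measure.isProbabilityMeasure_map hT.aemeasurable
  have hint : ∀ h : (ι → Bool) → ℝ, ∑ σ, P.real {σ} * h σ = ∫ z, h (T z) ∂(ballMeasure E) := by
    intro h
    rw [← integral_map hT.aemeasurable (measurable_of_finite h).aestronglyMeasurable,
      integral_fintype Integrable.of_finite]
    rfl
  refine ⟨fun σ => P.real {σ}, fun σ => measureReal_nonneg, ?_, fun i j => ?_⟩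
  · simp
  · have h1 : ∀ z, sgn (T z i) * sgn (T z j) =
        1 - 2 * (sep (v i) (v j)).indicator (fun _ => (1 : ℝ)) z := by
      intro z
      by_cases hi : 0 ≤ ⟪v i, z⟫ <;> by_cases hj : 0 ≤ ⟪v j, z⟫ <;>
        simp [T, sep, sgn, hi, hj] <;> norm_num
    have h2 : ∑ σ, P.real {σ} * (sgn (σ i) * sgn (σ j)) = 1 - 2 * (arccos ⟪v i, v j⟫ / π) := by
      rw [hint fun σ => sgn (σ i) * sgn (σ j)]
      simp_rw [h1]
      rw [integral_sub (integrable_const _), integral_const_mul,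
        integral_indicator_const _ (measurableSet_sep _ _), ballMeasure_sep (hv i) (hv j)]
      · simp
      · exact ((integrable_const _).indicator (measurableSet_sep _ _)).const_mul _
    have hb := abs_real_inner_le_norm (v i) (v j)
    rw [hv, hv, one_mul, abs_le] at hb
    rw [h2, g, show π * (1 - 2 * (arccos ⟪v i, v j⟫ / π)) / 2 = π / 2 - arccos ⟪v i, v j⟫ by
      field_simp, sin_pi_div_two_sub, cos_arccos hb.1 hb.2]

end Rounding

/-! ### Iterated rounding and the sketch of the unit vectors -/

/-- The Gram matrices in question stay Gram matrices of unit vectors under the inverse of `g`: the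
random signs of `exists_rounding` are vectors in `L²` of a finite probability space. -/
lemma exists_unit_family {ι : Type} [Fintype ι] [DecidableEq ι] {d : ℕ}
    (v : ι → EuclideanSpace ℝ (Fin d)) (hv : ∀ i, ‖v i‖ = 1) (k : ℕ) :
    ∃ (κ : Type) (_ : Fintype κ) (w : ι → EuclideanSpace ℝ κ), (∀ i, ‖w i‖ = 1) ∧
      ∀ i j, g^[k] ⟪w i, w j⟫ = ⟪v i, v j⟫ := by
  induction k with
  | zero => exact ⟨Fin d, inferInstance, v, hv, fun i j => rfl⟩
  | succ k ih =>
    obtain ⟨κ, _, w, hw, hwv⟩ := ih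
    obtain ⟨p, hp, hsum, hcorr⟩ := exists_rounding w hw
    let w' : ι → EuclideanSpace ℝ (ι → Bool) := fun i => WithLp.toLp 2 fun σ => √(p σ) * sgn (σ i)
    have hinner : ∀ i j, ⟪w' i, w' j⟫ = ∑ σ, p σ * (sgn (σ i) * sgn (σ j)) := by
      intro i j
      rw [PiLp.inner_apply]
      refine Finset.sum_congr rfl fun σ _ => ?_
      have := mul_self_sqrt (hp σ)
      simp only [w', RCLike.inner_apply, conj_trivial]
      linear_combination (sgn (σ i) * sgn (σ j)) * this
    refine ⟨ι → Bool, inferInstance, w', fun i => ?_, fun i j => ?_⟩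
    · have h : ‖w' i‖ ^ 2 = 1 := by
        rw [← real_inner_self_eq_norm_sq, hinner]
        simp [sgn_mul_self, hsum]
      exact (pow_eq_one_iff_of_nonneg (norm_nonneg _) two_ne_zero).1 h
    · rw [Function.iterate_succ_apply, hinner, hcorr, hwv]

/-- One-bit sketch of a finite set of unit vectors. -/
lemma exists_sign_sketch {d : ℕ} (T : Finset (EuclideanSpace ℝ (Fin d)))
    (hT : ∀ x ∈ T, ‖x‖ = 1) {k : ℕ} (hk : 1 ≤ k) {δ : ℝ} (hδ : 0 < δ) (hδ1 : δ ≤ 1) (N : ℕ)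
    (hN0 : 0 < N) (hN : 2 * (T.card : ℝ) ^ 2 * exp (-(δ ^ 2 * N / 4)) < 1) :
    ∃ φ : EuclideanSpace ℝ (Fin d) → EuclideanSpace ℝ (Fin N),
      (∀ x ∈ T, ∀ i, φ x i = 1 / √N ∨ φ x i = -(1 / √N)) ∧
      (∀ x ∈ T, ⟪φ x, φ x⟫ = 1) ∧
      ∀ x ∈ T, ∀ y ∈ T, ∃ t ∈ Set.Icc (-1 : ℝ) 1,
        ⟪φ x, φ y⟫ ∈ Set.Icc (-1 : ℝ) 1 ∧ |⟪φ x, φ y⟫ - t| ≤ δ ∧ g^[k] t = ⟪x, y⟫ := by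
  classical
  obtain ⟨k, rfl⟩ : ∃ j, k = j + 1 := ⟨k - 1, by omega⟩
  obtain ⟨κ, _, w, hw, hwv⟩ :=
    exists_unit_family (fun x : T => (x : EuclideanSpace ℝ (Fin d))) (fun x => hT x x.2) k
  obtain ⟨p, hp, hsum, hcorr⟩ := exists_rounding w hw
  obtain ⟨ω, hω⟩ := exists_sample p hp hsum
    (fun (q : T × T) σ => sgn (σ q.1) * sgn (σ q.2))
    (fun q σ => by rw [abs_mul, abs_sgn, abs_sgn, one_mul]) hδ hδ1 N
    (by simpa [Fintype.card_prod, sq] using hN)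
  have hNpos : (0 : ℝ) < N := by exact_mod_cast hN0
  have hsq : √(N : ℝ) * √(N : ℝ) = N := mul_self_sqrt hNpos.le
  have hs0 : 0 < √(N : ℝ) := sqrt_pos.2 hNpos
  let φ : EuclideanSpace ℝ (Fin d) → EuclideanSpace ℝ (Fin N) := fun x =>
    WithLp.toLp 2 fun i => if h : x ∈ T then sgn (ω i ⟨x, h⟩) / √N else 0
  have hφ : ∀ (x : T) (i : Fin N), φ x i = sgn (ω i x) / √N := by
    intro x i; simp [φ]
  have hinner : ∀ x y : T, ⟪φ x, φ y⟫ = (∑ i, sgn (ω i x) * sgn (ω i y)) / N := by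
    intro x y
    rw [PiLp.inner_apply, Finset.sum_div]
    refine Finset.sum_congr rfl fun i _ => ?_
    simp only [hφ, RCLike.inner_apply, conj_trivial]
    rw [div_mul_div_comm, hsq, mul_comm]
  have hself : ∀ x : T, ⟪φ x, φ x⟫ = 1 := by
    intro x
    rw [hinner]; simp [sgn_mul_self, hNpos.ne']
  refine ⟨φ, fun x hx i => ?_, fun x hx => hself ⟨x, hx⟩, fun x hx y hy => ?_⟩
  · have := hφ ⟨x, hx⟩ i
    rw [this]
    cases ω i ⟨x, hx⟩
    · right; simp [sgn, neg_div]
    · left; simp [sgn]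
  · have hω' := hω (⟨x, hx⟩, ⟨y, hy⟩)
    dsimp only at hω'
    refine ⟨∑ σ, p σ * (sgn (σ ⟨x, hx⟩) * sgn (σ ⟨y, hy⟩)), ?_, ?_, ?_, ?_⟩
    · rw [Set.mem_Icc, ← abs_le]
      calc _ ≤ ∑ σ, |p σ * (sgn (σ ⟨x, hx⟩) * sgn (σ ⟨y, hy⟩))| := Finset.abs_sum_le_sum_abs _ _
        _ = ∑ σ, p σ := by
          refine Finset.sum_congr rfl fun σ _ => ?_
          rw [abs_mul, abs_mul, abs_sgn, abs_sgn, abs_of_nonneg (hp σ)]; ring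
        _ ≤ 1 := hsum.le
    · rw [Set.mem_Icc, ← abs_le]
      have h := abs_real_inner_le_norm (φ x) (φ y)
      have h1 := hself ⟨x, hx⟩
      have h2 := hself ⟨y, hy⟩
      rw [real_inner_self_eq_norm_sq] at h1 h2
      rw [(pow_eq_one_iff_of_nonneg (norm_nonneg _) two_ne_zero).1 h1,
        (pow_eq_one_iff_of_nonneg (norm_nonneg _) two_ne_zero).1 h2, one_mul] at h
      exact h
    · rw [hinner ⟨x, hx⟩ ⟨y, hy⟩, div_sub' hNpos.ne', abs_div, abs_of_pos hNpos,
        div_le_iff₀ hNpos]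
      linarith
    · rw [Function.iterate_succ_apply, hcorr, hwv]

/-! ### From unit vectors to the ball -/

/-- The error analysis for one pair of vectors with norms `a, b`, inner product `u` of the
normalizations, and estimates `a', b', w` of these quantities. -/
lemma pair_error {a b a' b' u w ρ m ε : ℝ} (ha : 0 < a) (hb : 0 < b) (ha1 : a ≤ 1) (hb1 : b ≤ 1)
    (hρ0 : 0 < ρ) (hρa : ρ ≤ a ^ 2) (hρb : ρ ≤ b ^ 2) (hm : 0 < m) (hm2 : m ≤ 2)
    (hε : 0 < ε) (hε1 : ε < 1)
    (hu : m ^ 2 / 2 ≤ 1 - u) (hw : |w - u| ≤ 3 / 4 * ε * (1 - u)) (hw1 : |w| ≤ 1)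
    (haa : |a' - a| ≤ ρ * m ^ 2 * ε / 48) (hbb : |b' - b| ≤ ρ * m ^ 2 * ε / 48) :
    |(a' ^ 2 + b' ^ 2 - 2 * a' * b' * w) - (a ^ 2 + b ^ 2 - 2 * a * b * u)| ≤
      ε * (a ^ 2 + b ^ 2 - 2 * a * b * u) := by
  have hρab : ρ ≤ a * b := by
    refine (pow_le_pow_iff_left₀ hρ0.le (by positivity) two_ne_zero).1 ?_
    calc ρ ^ 2 = ρ * ρ := sq ρ
      _ ≤ a ^ 2 * b ^ 2 := by gcongr
      _ = (a * b) ^ 2 := by ring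
  obtain ⟨δ, hδ⟩ : ∃ δ, δ = ρ * m ^ 2 * ε / 48 := ⟨_, rfl⟩
  rw [← hδ] at haa hbb
  have hδ0 : 0 < δ := by rw [hδ]; positivity
  have hρ1 : ρ ≤ 1 := hρa.trans (pow_le_one₀ ha.le ha1)
  have hm4 : m ^ 2 ≤ 4 := by nlinarith
  have hδ1 : δ ≤ 1 / 12 := by
    have : ρ * m ^ 2 * ε ≤ 1 * 4 * 1 := by gcongr
    rw [hδ]; linarith
  obtain ⟨p, e1⟩ : ∃ p, a' = a + p := ⟨a' - a, by ring⟩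
  obtain ⟨q, e2⟩ : ∃ q, b' = b + q := ⟨b' - b, by ring⟩
  rw [e1, add_sub_cancel_left] at haa
  rw [e2, add_sub_cancel_left] at hbb
  -- the error splits into the part due to `w` and the part due to the norms
  have split : (a' ^ 2 + b' ^ 2 - 2 * a' * b' * w) - (a ^ 2 + b ^ 2 - 2 * a * b * u) =
      (2 * a * p + 2 * b * q - 2 * w * (a * q + b * p)) + (p ^ 2 + q ^ 2 - 2 * w * (p * q))
        - 2 * (a * b) * (w - u) := by rw [e1, e2]; ring
  have hp2 : p ^ 2 ≤ δ / 12 := by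
    have := pow_le_pow_left₀ (abs_nonneg p) haa 2
    rw [sq_abs] at this; nlinarith
  have hq2 : q ^ 2 ≤ δ / 12 := by
    have := pow_le_pow_left₀ (abs_nonneg q) hbb 2
    rw [sq_abs] at this; nlinarith
  have bp : |a * p| ≤ δ ∧ |b * p| ≤ δ := by
    rw [abs_mul, abs_mul, abs_of_pos ha, abs_of_pos hb]
    exact ⟨(mul_le_of_le_one_left (abs_nonneg p) ha1).trans haa,
      (mul_le_of_le_one_left (abs_nonneg p) hb1).trans haa⟩
  have bq : |a * q| ≤ δ ∧ |b * q| ≤ δ := by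
    rw [abs_mul, abs_mul, abs_of_pos ha, abs_of_pos hb]
    exact ⟨(mul_le_of_le_one_left (abs_nonneg q) ha1).trans hbb,
      (mul_le_of_le_one_left (abs_nonneg q) hb1).trans hbb⟩
  have hlin : |w * (a * q + b * p)| ≤ 2 * δ := by
    rw [abs_mul]
    have : |a * q + b * p| ≤ 2 * δ := (abs_add_le _ _).trans (by linarith [bq.1, bp.2])
    exact (mul_le_of_le_one_left (abs_nonneg _) hw1).trans this
  have hquad : |w * (p * q)| ≤ δ / 12 := by
    rw [abs_mul]
    have h1 : |p * q| ≤ δ / 12 := by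
      have h2 := sq_nonneg (p - q)
      have h3 := sq_nonneg (p + q)
      rw [abs_le]; constructor <;> linarith
    exact (mul_le_of_le_one_left (abs_nonneg _) hw1).trans h1
  have hmain : |2 * (a * b) * (w - u)| ≤ 3 / 4 * ε * (2 * (a * b) * (1 - u)) := by
    rw [abs_mul, abs_of_pos (by positivity)]
    have := mul_le_mul_of_nonneg_left hw (show 0 ≤ 2 * (a * b) by positivity)
    linarith
  have hlow : ρ * m ^ 2 ≤ 2 * (a * b) * (1 - u) := by
    have h1 : ρ * (m ^ 2 / 2) ≤ a * b * (1 - u) := by gcongr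
    linarith
  have hdist : 2 * (a * b) * (1 - u) ≤ a ^ 2 + b ^ 2 - 2 * a * b * u := by
    linarith [sq_nonneg (a - b)]
  have hε2 : 3 / 4 * ε * (2 * (a * b) * (1 - u)) + 9 * δ ≤ ε * (2 * (a * b) * (1 - u)) := by
    have := mul_le_mul_of_nonneg_left hlow hε.le
    have h9 : 9 * δ ≤ 1 / 4 * (ε * (ρ * m ^ 2)) := by
      have : 0 < ε * (ρ * m ^ 2) := by positivity
      rw [hδ]; linarith
    linarith
  have hε3 := mul_le_mul_of_nonneg_left hdist hε.le
  rw [split]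
  have := abs_le.1 bp.1
  have := abs_le.1 bq.2
  have := abs_le.1 hlin
  have := abs_le.1 hquad
  have := abs_le.1 hmain
  rw [abs_le]
  constructor <;> linarith [sq_nonneg p, sq_nonneg q]

/-- There is an absolute constant `C > 0` such that: for any set `S` of `n ≥ 2` nonzero
points of the closed unit ball of `ℝ^d`, with `ρ = min_{x ∈ S} ‖x‖²`, `m` the minimum
pairwise distance of the normalized points `x̂ = x/‖x‖`, `ℓ = ⌈log₂ log₂ (4/m)⌉ ≥ 1`,
and `ε > 0` with `ε < 1 − |⟨x̂,ŷ⟩|` for all distinct `x, y ∈ S`, there are a positive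
integer `N ≤ C·(log n / ε²)·(log₂(4/m))^{2 log₂(π/√2)}` and a map
`φ : {x̂ : x ∈ S} → N^{-1/2}{−1,1}^N` such that, for any approximations `ν(x)` of the
norms `‖x‖` up to additive error `ρm²ε/48`, the quantity
`ν(x)² + ν(y)² − 2ν(x)ν(y)g_ℓ(⟨φ(x̂),φ(ŷ)⟩)` recovers `‖x−y‖²` up to a multiplicative
`(1 ± ε)` error for all `x, y ∈ S`. -/
theorem ball_sketch :
    ∃ C : ℝ, 0 < C ∧
      ∀ (d n : ℕ) (S : Finset (EuclideanSpace ℝ (Fin d))) (ρ m ε : ℝ) (ℓ : ℕ),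
        1 ≤ d → S.card = n → 2 ≤ n →
        (∀ x ∈ S, ‖x‖ ≤ 1) →
        (∀ x ∈ S, x ≠ 0) →
        IsLeast {t : ℝ | ∃ x ∈ S, t = ‖x‖ ^ 2} ρ →
        IsLeast {t : ℝ | ∃ x ∈ S, ∃ y ∈ S, x ≠ y ∧
          t = ‖‖x‖⁻¹ • x - ‖y‖⁻¹ • y‖} m →
        (ℓ : ℤ) = ⌈Real.logb 2 (Real.logb 2 (4 / m))⌉ →
        1 ≤ ℓ →
        0 < ε →
        (∀ x ∈ S, ∀ y ∈ S, x ≠ y → ε < 1 - |⟪‖x‖⁻¹ • x, ‖y‖⁻¹ • y⟫|) →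
        ∃ N : ℕ, 0 < N ∧
          (N : ℝ) ≤ C * (Real.log n / ε ^ 2) *
            Real.logb 2 (4 / m) ^ (2 * Real.logb 2 (Real.pi / Real.sqrt 2)) ∧
          ∃ φ : EuclideanSpace ℝ (Fin d) → EuclideanSpace ℝ (Fin N),
            (∀ x ∈ S, ∀ i, φ (‖x‖⁻¹ • x) i = 1 / Real.sqrt N ∨
              φ (‖x‖⁻¹ • x) i = -(1 / Real.sqrt N)) ∧
            ∀ ν : EuclideanSpace ℝ (Fin d) → ℝ,
              (∀ x ∈ S, |ν x - ‖x‖| ≤ ρ * m ^ 2 * ε / 48) →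
              ∀ x ∈ S, ∀ y ∈ S,
                |(ν x ^ 2 + ν y ^ 2 -
                    2 * ν x * ν y * g^[ℓ] ⟪φ (‖x‖⁻¹ • x), φ (‖y‖⁻¹ • y)⟫) -
                  ‖x - y‖ ^ 2| ≤ ε * ‖x - y‖ ^ 2 := by
  refine ⟨6400, by norm_num, ?_⟩
  intro d n S ρ m ε ℓ _ hcard hn hS1 hS0 hρ hmin hℓ hℓ1 hε hεS
  set hat : EuclideanSpace ℝ (Fin d) → EuclideanSpace ℝ (Fin d) := fun x => ‖x‖⁻¹ • x with hhat
  have hunit : ∀ x ∈ S, ‖hat x‖ = 1 := fun x hx => by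
    have := norm_ne_zero_iff.2 (hS0 x hx)
    simp [hhat, norm_smul, this]
  obtain ⟨⟨x₀, hx₀, y₀, hy₀, hne, hm_eq⟩, hmlb⟩ := hmin
  obtain ⟨⟨z₀, hz₀, hz_eq⟩, hρlb⟩ := hρ
  have hρ0 : 0 < ρ := by
    have := norm_pos_iff.2 (hS0 z₀ hz₀)
    rw [hz_eq]; positivity
  have hε1 : ε < 1 := by linarith [hεS x₀ hx₀ y₀ hy₀ hne, abs_nonneg ⟪hat x₀, hat y₀⟫]
  have hm : 0 < m := by
    rw [hm_eq, norm_pos_iff, sub_ne_zero]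
    intro heq
    have h := hεS x₀ hx₀ y₀ hy₀ hne
    have h1 : ‖‖y₀‖⁻¹ • y₀‖ = 1 := hunit y₀ hy₀
    rw [heq, real_inner_self_eq_norm_sq, h1] at h
    norm_num at h
    linarith
  have hm2 : m ≤ 2 := by
    rw [hm_eq]
    refine (norm_sub_le _ _).trans ?_
    have h1 : ‖‖x₀‖⁻¹ • x₀‖ = 1 := hunit x₀ hx₀
    have h2 : ‖‖y₀‖⁻¹ • y₀‖ = 1 := hunit y₀ hy₀
    rw [h1, h2]; norm_num
  set L := logb 2 (4 / m) with hL
  have hL1 : 1 ≤ L := by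
    rw [hL, le_logb_iff_rpow_le one_lt_two (by positivity), rpow_one, le_div_iff₀ hm]
    linarith
  -- `ℓ` is chosen so that `L ≤ 2 ^ ℓ < 2 * L`
  have hℓr : (ℓ : ℝ) = (⌈logb 2 L⌉ : ℝ) := by exact_mod_cast congrArg (Int.cast (R := ℝ)) hℓ
  have hL2 : L ≤ 2 ^ ℓ := by
    have h := Int.le_ceil (logb 2 L)
    rw [← hℓr, logb_le_iff_le_rpow one_lt_two (by linarith), rpow_natCast] at h
    exact h
  have h2L : (2 : ℝ) ^ ℓ ≤ 2 * L := by
    have h := (Int.ceil_lt_add_one (logb 2 L)).le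
    rw [← hℓr, ← sub_le_iff_le_add, le_logb_iff_rpow_le one_lt_two (by linarith),
      rpow_sub two_pos, rpow_natCast, rpow_one] at h
    linarith
  have hkm : 4 / m ≤ 2 ^ (2 ^ ℓ) := by
    have h := hL2
    rw [hL, logb_le_iff_le_rpow one_lt_two (by positivity)] at h
    exact_mod_cast h
  have h2ℓ : (1 : ℝ) ≤ 2 ^ ℓ := one_le_pow₀ (by norm_num)
  set δ := ε / (10 * 2 ^ ℓ) with hδ
  have hδ0 : 0 < δ := by positivity
  have hδ1 : δ ≤ 1 := by
    rw [hδ, div_le_one (by positivity)]; linarith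
  have hn2 : (2 : ℝ) ≤ n := by exact_mod_cast hn
  have hlog : 1 / 2 ≤ log n := by
    have := log_le_log two_pos hn2
    linarith [log_two_gt_d9]
  set X := 12 * (log n / δ ^ 2) with hX
  have hlogδ : 1 / 2 ≤ log n / δ ^ 2 := by
    rw [le_div_iff₀ (by positivity)]
    have : δ ^ 2 ≤ 1 := pow_le_one₀ hδ0.le hδ1
    linarith
  set N := ⌈X⌉₊ + 1 with hN
  have hNle : (N : ℝ) ≤ 16 * (log n / δ ^ 2) := by
    have := (Nat.ceil_lt_add_one (show 0 ≤ X by positivity)).le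
    rw [hN]; push_cast; linarith
  have hNgt : X < N := by
    have := Nat.le_ceil X
    rw [hN]; push_cast; linarith
  classical
  set T := S.image hat with hT
  have hTcard : (T.card : ℝ) ≤ n := by
    rw [← hcard]; exact_mod_cast Finset.card_image_le
  have hunion : 2 * (T.card : ℝ) ^ 2 * exp (-(δ ^ 2 * N / 4)) < 1 := by
    have h1 : 3 * log n < δ ^ 2 * N / 4 := by
      have : X * δ ^ 2 = 12 * log n := by rw [hX]; field_simp
      have := mul_lt_mul_of_pos_right hNgt (show 0 < δ ^ 2 by positivity)
      linarith
    have hn0 : (0 : ℝ) < n := by linarith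
    have h2 : exp (-(δ ^ 2 * N / 4)) < ((n : ℝ) ^ 3)⁻¹ := by
      have h3 : ((n : ℝ) ^ 3)⁻¹ = exp (-(3 * log n)) := by
        rw [exp_neg, ← exp_log (show (0 : ℝ) < n ^ 3 by positivity), log_pow]
        norm_num
      rw [h3, exp_lt_exp]; linarith
    calc _ ≤ 2 * (n : ℝ) ^ 2 * exp (-(δ ^ 2 * N / 4)) := by gcongr
      _ < 2 * (n : ℝ) ^ 2 * ((n : ℝ) ^ 3)⁻¹ := by gcongr
      _ = 2 / n := by field_simp
      _ ≤ 1 := (div_le_one hn0).2 hn2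
  have hTunit : ∀ x ∈ T, ‖x‖ = 1 := by
    intro x hx
    obtain ⟨y, hy, rfl⟩ := Finset.mem_image.1 hx
    exact hunit y hy
  obtain ⟨φ, hφ, hφself, hφpair⟩ :=
    exists_sign_sketch T hTunit hℓ1 hδ0 hδ1 N (Nat.succ_pos _) hunion
  have hmemT : ∀ x ∈ S, hat x ∈ T := fun x hx => Finset.mem_image_of_mem _ hx
  refine ⟨N, Nat.succ_pos _, ?_, φ, fun x hx => hφ _ (hmemT x hx), ?_⟩
  · have hexp : L ^ 2 ≤ L ^ (2 * logb 2 (π / √2)) := by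
      rw [← rpow_two]
      refine rpow_le_rpow_of_exponent_le hL1 ?_
      have : 1 ≤ logb 2 (π / √2) := by
        rw [le_logb_iff_rpow_le one_lt_two (by positivity), rpow_one, le_div_iff₀ (by positivity)]
        linarith [sqrt_two_lt_three_halves, pi_gt_three]
      linarith
    have hlog0 : 0 ≤ log n / ε ^ 2 := by positivity
    calc (N : ℝ) ≤ 16 * (log n / δ ^ 2) := hNle
      _ = 1600 * (log n / ε ^ 2) * (2 ^ ℓ) ^ 2 := by rw [hδ]; field_simp; norm_num
      _ ≤ 1600 * (log n / ε ^ 2) * (2 * L) ^ 2 := by gcongr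
      _ = 6400 * (log n / ε ^ 2) * L ^ 2 := by ring
      _ ≤ _ := by gcongr
  · intro ν hν x hx y hy
    rcases eq_or_ne x y with rfl | hxy
    · have h1 : ⟪φ (‖x‖⁻¹ • x), φ (‖x‖⁻¹ • x)⟫ = 1 := hφself _ (hmemT x hx)
      rw [h1, g_iter_one, sub_self, norm_zero]
      have : ν x ^ 2 + ν x ^ 2 - 2 * ν x * ν x * 1 - 0 ^ 2 = 0 := by ring
      rw [this]; simp
    · obtain ⟨t, ht, hs, hst, hgt⟩ := hφpair _ (hmemT x hx) _ (hmemT y hy)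
      have hx0 := norm_pos_iff.2 (hS0 x hx)
      have hy0 := norm_pos_iff.2 (hS0 y hy)
      have hgap : m ^ 2 / 2 ≤ 1 - ⟪hat x, hat y⟫ := by
        have h1 : m ≤ ‖hat x - hat y‖ := hmlb ⟨x, hx, y, hy, hxy, rfl⟩
        have h2 := pow_le_pow_left₀ hm.le h1 2
        rw [norm_sub_sq_real, hunit x hx, hunit y hy] at h2
        linarith
      have hstab := g_iter_stable ℓ hs ht hm hkm (by rw [hgt]; exact hgap) hε hε1 hst
      rw [hgt] at hstab
      have hdist : ‖x - y‖ ^ 2 = ‖x‖ ^ 2 + ‖y‖ ^ 2 - 2 * ‖x‖ * ‖y‖ * ⟪hat x, hat y⟫ := by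
        have h1 : ⟪hat x, hat y⟫ = ‖x‖⁻¹ * (‖y‖⁻¹ * ⟪x, y⟫) := by
          rw [hhat, real_inner_smul_left, real_inner_smul_right]
        rw [norm_sub_sq_real, h1]
        field_simp
        ring
      rw [hdist]
      exact pair_error hx0 hy0 (hS1 x hx) (hS1 y hy) hρ0 (hρlb ⟨x, hx, rfl⟩) (hρlb ⟨y, hy, rfl⟩)
        hm hm2 hε hε1 hgap hstab (abs_le.2 (g_iter_mem ℓ hs)) (hν x hx) (hν y hy)
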